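/- Let d ≥ 2 and r ≥ 1 be integers. There is a constant C(r,d) > 0 such that for every m ≥ 1, Θ_m(U(C^r[0,1]^d), L_∞[0,1]^d) ≤ C(r,d) m^{−r/(d−1)}; that is, every f ∈ U(C^r[0,1]^d) can be approximated in the sup norm within C(r,d) m^{−r/(d−1)} by a sum of m products u^{1,s}(x_1)⋯u^{d,s}(x_d). -/

import Mathlib

/-- The closed unit cube `[0,1]^d`. -/
def unitCube (d : ℕ) : Set (Fin d → ℝ) := Set.univ.pi fun _ => Set.Icc 0 1

/-- Partial derivative (within the unit cube) in direction `i`. -/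
noncomputable def pdermW (d : ℕ) (i : Fin d) (f : (Fin d → ℝ) → ℝ) :
    (Fin d → ℝ) → ℝ :=
  fun x => fderivWithin ℝ f (unitCube d) x (Pi.single i 1)

/-- Iterated partial derivative (within the unit cube) along a list of coordinates. -/
noncomputable def iterPDW (d : ℕ) : List (Fin d) → ((Fin d → ℝ) → ℝ) → (Fin d → ℝ) → ℝ
  | [], f => f
  | i :: L, f => pdermW d i (iterPDW d L f)

/-- The unit ball `U(C^r[0,1]^d)`: functions with all partial derivatives of total order
at most `r` existing, continuous, and bounded by `1` on the cube. -/
def UCr (d r : ℕ) : Set ((Fin d → ℝ) → ℝ) :=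
  {f | ContDiffOn ℝ r f (unitCube d) ∧
    ∀ L : List (Fin d), L.length ≤ r → ∀ x ∈ unitCube d, |iterPDW d L f x| ≤ 1}

lemma aux_lagrange (q : ℕ) : ∃ (K0 : ℝ) (z : Fin (q+1) → ℝ) (l : Fin (q+1) → ℝ → ℝ),
    0 ≤ K0 ∧ (∀ j, z j ∈ Set.Icc (0:ℝ) 1) ∧ (∀ j, ∀ s ∈ Set.Icc (0:ℝ) 1, |l j s| ≤ K0) ∧
    ∀ k, k ≤ q → ∀ s, ∑ j, (z j)^k * l j s = s^k := by
  let z : Fin (q+1) → ℝ := fun j => (j : ℝ) / (q+1)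
  let l : Fin (q+1) → ℝ → ℝ := fun j s => (Lagrange.basis Finset.univ z j).eval s
  have hb : ∀ j, ∃ M, ∀ s ∈ Set.Icc (0:ℝ) 1, |l j s| ≤ M := by
    intro j
    obtain ⟨M, hM⟩ := (isCompact_Icc (a := (0:ℝ)) (b := 1)).exists_bound_of_continuousOn
      (f := l j) (Polynomial.continuous _).continuousOn
    exact ⟨M, fun s hs => by simpa using hM s hs⟩
  choose M hM using hb
  have hinj : Function.Injective z := by
    intro a b hab
    have h1 : (0:ℝ) < q + 1 := by positivity
    simp only [z] at hab
    rw [div_left_inj' h1.ne'] at hab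
    exact Fin.ext (by exact_mod_cast hab)
  refine ⟨∑ j, |M j|, z, l, Finset.sum_nonneg fun _ _ => abs_nonneg _, ?_, ?_, ?_⟩
  · intro j
    have h1 : (0:ℝ) < q + 1 := by positivity
    refine ⟨by positivity, ?_⟩
    simp only [z]
    rw [div_le_one h1]
    have := j.2
    have : (j:ℝ) < ((q+1 : ℕ) : ℝ) := by exact_mod_cast this
    push_cast at this
    exact this.le
  · intro j s hs
    exact ((hM j s hs).trans (le_abs_self _)).trans
      (Finset.single_le_sum (f := fun j => |M j|) (fun _ _ => abs_nonneg _) (Finset.mem_univ j))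
  · intro k hk s
    have h := Lagrange.eq_interpolate (s := Finset.univ) (v := z) (f := (Polynomial.X : Polynomial ℝ)^k)
      hinj.injOn (by
        rw [Polynomial.degree_X_pow]
        simp
        exact_mod_cast Nat.lt_succ_of_le hk)
    have h2 := congrArg (Polynomial.eval s) h
    rw [Lagrange.interpolate_apply, Polynomial.eval_finsetSum] at h2
    simp at h2
    rw [h2]

lemma aux_cell (n : ℕ) (hn : 1 ≤ n) (t : ℝ) : ∃ k : Fin n, t ∈ Set.Icc (0:ℝ) 1 →
    t * n - (k:ℕ) ∈ Set.Icc (0:ℝ) 1 := by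
  by_cases ht : t ∈ Set.Icc (0:ℝ) 1
  swap
  · exact ⟨⟨0, hn⟩, fun h => absurd h ht⟩
  have hn' : (1:ℝ) ≤ n := by exact_mod_cast hn
  have h0 : 0 ≤ t * n := by have := ht.1; positivity
  by_cases h1 : t = 1
  · refine ⟨⟨n-1, by omega⟩, fun _ => ?_⟩
    subst h1
    simp [Nat.cast_sub hn]
  · have h2 : t * n < n := by
      have : t < 1 := lt_of_le_of_ne ht.2 h1
      nlinarith
    refine ⟨⟨⌊t*n⌋₊, (Nat.floor_lt h0).2 h2⟩, fun _ => ⟨?_, ?_⟩⟩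
    · have := Nat.floor_le h0
      simpa using this
    · have := Nat.lt_floor_add_one (t*n)
      simp only
      linarith

lemma aux_taylor (q : ℕ) (g : ℝ → ℝ) (hg : ContDiffOn ℝ ((q+1 : ℕ)) g (Set.Icc 0 1))
    (hb : ∀ x ∈ Set.Icc (0:ℝ) 1, |iteratedDerivWithin (q+1) g (Set.Icc 0 1) x| ≤ 1)
    (a w : ℝ) (ha : 0 ≤ a) (hw : 0 < w) (haw : a + w ≤ 1) :
    ∃ c : ℕ → ℝ, ∀ s ∈ Set.Icc (0:ℝ) 1,
      |g (a + w * s) - ∑ k ∈ Finset.range (q+1), c k * s^k| ≤ w^(q+1) := by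
  have hsub : Set.Icc a (a+w) ⊆ Set.Icc 0 1 := Set.Icc_subset_Icc ha haw
  refine ⟨fun k => (k.factorial : ℝ)⁻¹ * w^k * iteratedDerivWithin k g (Set.Icc a (a+w)) a, ?_⟩
  intro s hs
  have hx : a + w * s ∈ Set.Icc a (a+w) := by
    constructor <;> nlinarith [hs.1, hs.2]
  have h := taylor_mean_remainder_bound (f := g) (a := a) (b := a + w) (C := 1) (x := a + w*s) (n := q)
    (by linarith) (by exact_mod_cast hg.mono hsub) hx (by
      intro y hy
      have := hb y (hsub hy)
      rw [iteratedDerivWithin_eq_iteratedFDerivWithin] at this ⊢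
      rw [iteratedFDerivWithin_subset hsub (uniqueDiffOn_Icc (by linarith))
        (uniqueDiffOn_Icc (by norm_num)) hg hy]
      simpa using this)
  rw [taylor_within_apply, Real.norm_eq_abs] at h
  have e : ∑ k ∈ Finset.range (q+1), ((k.factorial : ℝ)⁻¹ * w^k *
      iteratedDerivWithin k g (Set.Icc a (a+w)) a) * s^k = 
      ∑ k ∈ Finset.range (q+1), ((k.factorial : ℝ)⁻¹ * (a + w*s - a)^k) •
      iteratedDerivWithin k g (Set.Icc a (a+w)) a := by
    refine Finset.sum_congr rfl fun k _ => ?_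
    rw [add_sub_cancel_left, mul_pow, smul_eq_mul]
    ring
  simp only [e]
  refine h.trans ?_
  rw [one_mul, add_sub_cancel_left]
  have hf : (1:ℝ) ≤ q.factorial := by exact_mod_cast Nat.succ_le_of_lt q.factorial_pos
  have h3 : (w*s)^(q+1) ≤ w^(q+1) :=
    pow_le_pow_left₀ (mul_nonneg hw.le hs.1) (by nlinarith [hs.2]) _
  have h4 : 0 ≤ (w*s)^(q+1) := pow_nonneg (mul_nonneg hw.le hs.1) _
  exact (div_le_self h4 hf).trans h3

lemma aux_one_dim (q : ℕ) : ∃ K : ℝ, 1 ≤ K ∧ ∀ n : ℕ, 1 ≤ n →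
    ∃ (p : Fin n × Fin (q+1) → ℝ) (φ : Fin n × Fin (q+1) → ℝ → ℝ),
      (∀ j, p j ∈ Set.Icc (0:ℝ) 1) ∧ (∀ j t, |φ j t| ≤ K) ∧
      (∀ t ∈ Set.Icc (0:ℝ) 1, ∑ j, |φ j t| ≤ K) ∧
      ∀ g : ℝ → ℝ, ContDiffOn ℝ ((q+1 : ℕ)) g (Set.Icc 0 1) →
        (∀ x ∈ Set.Icc (0:ℝ) 1, |iteratedDerivWithin (q+1) g (Set.Icc 0 1) x| ≤ 1) →
        ∀ t ∈ Set.Icc (0:ℝ) 1, |g t - ∑ j, φ j t * g (p j)| ≤ K * (1/(n:ℝ))^(q+1) := by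
  obtain ⟨K0, z, l, hK0, hz, hl, hrep⟩ := aux_lagrange q
  refine ⟨1 + (q+1) * K0, by nlinarith [mul_nonneg (by positivity : (0:ℝ) ≤ q+1) hK0], ?_⟩
  intro n hn
  classical
  choose κ hκ using aux_cell n hn
  have hn' : (0:ℝ) < n := by exact_mod_cast hn
  have hsum : ∀ t ∈ Set.Icc (0:ℝ) 1, ∀ F : Fin n × Fin (q+1) → ℝ → ℝ,
      (∀ j, F j 0 = 0) →
      ∑ j : Fin n × Fin (q+1), F j (if t ∈ Set.Icc (0:ℝ) 1 ∧ j.1 = κ t then l j.2 (t*n - (j.1:ℕ)) else 0)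
        = ∑ j, F (κ t, j) (l j (t*n - (κ t : ℕ))) := by
    intro t ht F hF
    rw [Fintype.sum_prod_type, Finset.sum_eq_single (κ t)]
    · simp [ht.1, ht.2]
    · intro b _ hb
      simp [hb, hF]
    · simp
  have hlk : ∀ t ∈ Set.Icc (0:ℝ) 1, ∑ j, |l j (t*n - (κ t : ℕ))| ≤ (q+1) * K0 := by
    intro t ht
    calc _ ≤ ∑ j : Fin (q+1), K0 := Finset.sum_le_sum fun j _ => hl j _ (hκ t ht)
      _ = _ := by simp
  refine ⟨fun j => ((j.1:ℕ) : ℝ) / n + 1/n * z j.2,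
    fun j t => if t ∈ Set.Icc (0:ℝ) 1 ∧ j.1 = κ t then l j.2 (t*n - (j.1:ℕ)) else 0, ?_, ?_, ?_, ?_⟩
  · intro j
    have h1 := hz j.2
    have h2 : ((j.1:ℕ):ℝ) + 1 ≤ n := by exact_mod_cast j.1.2
    have h3 : 0 ≤ ((j.1:ℕ):ℝ) := by positivity
    have e : ((j.1:ℕ):ℝ)/n + 1/n * z j.2 = ((j.1:ℕ) + z j.2)/n := by field_simp
    simp only [e]
    exact ⟨div_nonneg (by linarith [h1.1]) hn'.le, (div_le_one hn').2 (by linarith [h1.2])⟩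
  · intro j t
    have h0 : 0 ≤ (q:ℝ) * K0 := by positivity
    beta_reduce
    split_ifs with h
    · have := hl j.2 (t*n - (j.1:ℕ)) (by rw [h.2]; exact hκ t h.1)
      linarith
    · simp; linarith
  · intro t ht
    rw [hsum t ht (fun _ y => |y|) (by simp)]
    linarith [hlk t ht]
  · intro g hg hb t ht
    rw [hsum t ht (fun j y => y * g (((j.1:ℕ) : ℝ) / n + 1/n * z j.2)) (by simp)]
    simp only
    set k := κ t with hk
    have hs := hκ t ht
    rw [← hk] at hs
    set s := t*n - (k:ℕ) with hsdef
    have hkn : ((k:ℕ):ℝ) + 1 ≤ n := by exact_mod_cast k.2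
    obtain ⟨c, hc⟩ := aux_taylor q g hg hb (((k:ℕ):ℝ)/n) (1/n) (by positivity) (by positivity)
      (by rw [← add_div]; exact (div_le_one hn').2 hkn)
    have ht' : t = ((k:ℕ):ℝ)/n + 1/n * s := by rw [hsdef]; field_simp; ring
    let T : ℝ → ℝ := fun s => ∑ i ∈ Finset.range (q+1), c i * s^i
    have hT : ∑ j, l j s * T (z j) = T s := by
      simp only [T, Finset.mul_sum]
      rw [Finset.sum_comm]
      refine Finset.sum_congr rfl fun i hi => ?_
      rw [← hrep i (by simpa [Nat.lt_succ_iff] using hi) s, Finset.mul_sum]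
      exact Finset.sum_congr rfl fun j _ => by ring
    have hdec : g t - ∑ j, l j s * g (((k:ℕ):ℝ)/n + 1/n * z j) =
        (g (((k:ℕ):ℝ)/n + 1/n * s) - T s) - 
        ∑ j, l j s * (g (((k:ℕ):ℝ)/n + 1/n * z j) - T (z j)) := by
      simp only [mul_sub, Finset.sum_sub_distrib]
      rw [hT, ← ht']; ring
    rw [hdec]
    have hw : 0 ≤ (1/(n:ℝ))^(q+1) := by positivity
    have hB : |∑ j, l j s * (g (((k:ℕ):ℝ)/n + 1/n * z j) - T (z j))| ≤
        ((q+1) * K0) * (1/(n:ℝ))^(q+1) := by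
      calc _ ≤ ∑ j, |l j s * (g (((k:ℕ):ℝ)/n + 1/n * z j) - T (z j))| :=
            Finset.abs_sum_le_sum_abs _ _
        _ ≤ ∑ j, |l j s| * (1/(n:ℝ))^(q+1) := by
            refine Finset.sum_le_sum fun j _ => ?_
            rw [abs_mul]
            exact mul_le_mul_of_nonneg_left (hc _ (hz j)) (abs_nonneg _)
        _ = (∑ j, |l j s|) * (1/(n:ℝ))^(q+1) := by rw [Finset.sum_mul]
        _ ≤ _ := mul_le_mul_of_nonneg_right (hlk t ht) hw
    refine (abs_sub _ _).trans ?_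
    have := hc s hs
    simp only [T] at hB ⊢
    linarith

lemma cube_ud (d : ℕ) : UniqueDiffOn ℝ (unitCube d) :=
  UniqueDiffOn.univ_pi fun _ => uniqueDiffOn_Icc (by norm_num)

lemma cube_update {d : ℕ} {x : Fin d → ℝ} (hx : x ∈ unitCube d) (i : Fin d) {t : ℝ}
    (ht : t ∈ Set.Icc (0:ℝ) 1) : Function.update x i t ∈ unitCube d := by
  intro j _
  by_cases h : j = i
  · subst h; simpa using ht
  · simpa [h] using hx j (Set.mem_univ _)

lemma iterPDW_contDiff (d r : ℕ) (f : (Fin d → ℝ) → ℝ) (hf : ContDiffOn ℝ r f (unitCube d))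
    (i : Fin d) : ∀ k m : ℕ, k + m = r →
      ContDiffOn ℝ m (iterPDW d (List.replicate k i) f) (unitCube d) := by
  intro k
  induction k with
  | zero => intro m hm; simp at hm; subst hm; exact hf
  | succ k ih =>
    intro m hm
    have h := ih (m+1) (by omega)
    rw [List.replicate_succ]
    exact (h.fderivWithin (cube_ud d) (m := m) (by norm_cast)).clm_apply contDiffOn_const

lemma iter_eq (d r : ℕ) (f : (Fin d → ℝ) → ℝ) (hf : ContDiffOn ℝ r f (unitCube d))
    (i : Fin d) (x : Fin d → ℝ) (hx : x ∈ unitCube d) : ∀ k : ℕ, k ≤ r → ∀ t ∈ Set.Icc (0:ℝ) 1,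
      iteratedDerivWithin k (fun t => f (Function.update x i t)) (Set.Icc 0 1) t =
        iterPDW d (List.replicate k i) f (Function.update x i t) := by
  intro k
  induction k with
  | zero => intro _ t _; simp [iterPDW]
  | succ k ih =>
    intro hk t ht
    rw [iteratedDerivWithin_succ, derivWithin_congr (ih (by omega)) (ih (by omega) t ht)]
    have hd : DifferentiableWithinAt ℝ (iterPDW d (List.replicate k i) f) (unitCube d)
        (Function.update x i t) :=
      (iterPDW_contDiff d r f hf i k (r-k) (by omega)).differentiableOn
        (by norm_cast; omega) _ (cube_update hx i ht)
    have := hd.hasFDerivWithinAt.comp_hasDerivWithinAt t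
      ((hasDerivAt_update x i t).hasDerivWithinAt (s := Set.Icc 0 1))
      (fun s hs => cube_update hx i hs)
    exact this.derivWithin (uniqueDiffOn_Icc (by norm_num) t ht)

lemma slice_ok (d r : ℕ) (f : (Fin d → ℝ) → ℝ) (hf : f ∈ UCr d r)
    (i : Fin d) (x : Fin d → ℝ) (hx : x ∈ unitCube d) :
    ContDiffOn ℝ r (fun t => f (Function.update x i t)) (Set.Icc 0 1) ∧
    ∀ t ∈ Set.Icc (0:ℝ) 1,
      |iteratedDerivWithin r (fun t => f (Function.update x i t)) (Set.Icc 0 1) t| ≤ 1 := by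
  refine ⟨hf.1.comp (contDiff_update r x i).contDiffOn (fun s hs => cube_update hx i hs), ?_⟩
  intro t ht
  rw [iter_eq d r f hf.1 i x hx r le_rfl t ht]
  exact hf.2 _ (by simp) _ (cube_update hx i ht)

lemma tensor_approx {d : ℕ} (f : (Fin d → ℝ) → ℝ) (K ε : ℝ) (hK : 1 ≤ K) (hε : 0 ≤ ε)
    {ι : Type} [Fintype ι] (p : ι → ℝ) (φ : ι → ℝ → ℝ)
    (hp : ∀ j, p j ∈ Set.Icc (0:ℝ) 1) (hφ : ∀ j t, |φ j t| ≤ K)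
    (hs : ∀ t ∈ Set.Icc (0:ℝ) 1, ∑ j, |φ j t| ≤ K)
    (hf : ∀ i, ∀ x ∈ unitCube d, |f x - ∑ j, φ j (x i) * f (Function.update x i (p j))| ≤ ε)
    (S : Finset (Fin d)) :
    ∃ (κ : Type) (_ : Fintype κ) (c : κ → Fin d → ℝ) (v : κ → Fin d → ℝ → ℝ),
      Fintype.card κ = Fintype.card ι ^ S.card ∧ (∀ k, c k ∈ unitCube d) ∧
      (∀ k i t, |v k i t| ≤ K) ∧
      ∀ x ∈ unitCube d,
        |f x - ∑ k, (∏ i ∈ S, v k i (x i)) * f (fun i => if i ∈ S then c k i else x i)|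
          ≤ S.card * K ^ S.card * ε := by
  induction S using Finset.induction_on with
  | empty =>
    refine ⟨Unit, inferInstance, fun _ _ => 0, fun _ _ _ => 0, by simp, ?_, ?_, ?_⟩
    · intro _ i _; simp
    · intro _ _ _; simp; linarith
    · intro x _; simp
  | insert a S ha ih =>
    obtain ⟨κ, _, c, v, hcard, hc, hv, herr⟩ := ih
    refine ⟨ι × κ, inferInstance, fun k => Function.update (c k.2) a (p k.1),
      fun k => Function.update (v k.2) a (φ k.1), ?_, ?_, ?_, ?_⟩
    · rw [Fintype.card_prod, hcard, Finset.card_insert_of_notMem ha, pow_succ, mul_comm]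
    · exact fun k => cube_update (hc _) a (hp _)
    · intro k i t
      by_cases h : i = a
      · subst h; simpa using hφ _ _
      · simpa [h] using hv _ _ _
    · intro x hx
      set A : (Fin d → ℝ) → ℝ := fun x =>
        ∑ k, (∏ i ∈ S, v k i (x i)) * f (fun i => if i ∈ S then c k i else x i) with hA
      have hrep : ∑ k : ι × κ, (∏ i ∈ insert a S, Function.update (v k.2) a (φ k.1) i (x i)) *
          f (fun i => if i ∈ insert a S then Function.update (c k.2) a (p k.1) i else x i) =
          ∑ j, φ j (x a) * A (Function.update x a (p j)) := by
        rw [Fintype.sum_prod_type]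
        refine Finset.sum_congr rfl fun j _ => ?_
        rw [hA, Finset.mul_sum]
        refine Finset.sum_congr rfl fun k _ => ?_
        rw [Finset.prod_insert ha, mul_assoc]
        have e1 : ∏ i ∈ S, Function.update (v k) a (φ j) i (x i) =
            ∏ i ∈ S, v k i (Function.update x a (p j) i) := by
          refine Finset.prod_congr rfl fun i hi => ?_
          have : i ≠ a := fun h => ha (h ▸ hi)
          simp [this]
        have e2 : (fun i => if i ∈ insert a S then Function.update (c k) a (p j) i else x i) =
            (fun i => if i ∈ S then c k i else Function.update x a (p j) i) := by
          funext i
          by_cases h : i = a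
          · subst h; simp [ha]
          · simp [h]
        simp only [e1, e2, Function.update_self]
      rw [hrep]
      set E : ℝ := S.card * K ^ S.card * ε with hE
      have hE0 : 0 ≤ E := by positivity
      have hdec : f x - ∑ j, φ j (x a) * A (Function.update x a (p j)) =
          (f x - ∑ j, φ j (x a) * f (Function.update x a (p j))) +
          ∑ j, φ j (x a) * (f (Function.update x a (p j)) - A (Function.update x a (p j))) := by
        simp only [mul_sub, Finset.sum_sub_distrib]; ring
      have hB : |∑ j, φ j (x a) * (f (Function.update x a (p j)) - A (Function.update x a (p j)))|
          ≤ K * E := by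
        calc _ ≤ ∑ j, |φ j (x a) * (f (Function.update x a (p j)) - A (Function.update x a (p j)))| :=
              Finset.abs_sum_le_sum_abs _ _
          _ ≤ ∑ j, |φ j (x a)| * E := by
              refine Finset.sum_le_sum fun j _ => ?_
              rw [abs_mul]
              exact mul_le_mul_of_nonneg_left (herr _ (cube_update hx a (hp j))) (abs_nonneg _)
          _ = (∑ j, |φ j (x a)|) * E := by rw [Finset.sum_mul]
          _ ≤ _ := mul_le_mul_of_nonneg_right (hs _ (hx a (Set.mem_univ _))) hE0
      rw [hdec]
      refine (abs_add_le _ _).trans ?_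
      have h1 := hf a x hx
      rw [Finset.card_insert_of_notMem ha]
      push_cast
      have h2 : 1 ≤ K ^ (S.card + 1) := one_le_pow₀ hK
      have h3 : ε ≤ K ^ (S.card+1) * ε := le_mul_of_one_le_left hε h2
      have h4 : K * E = S.card * K ^ (S.card+1) * ε := by rw [hE]; ring
      linarith [add_mul ((S.card : ℝ) * K^(S.card+1)) (K^(S.card+1)) ε,
        add_mul (S.card:ℝ) 1 (K^(S.card+1)), 
        congrArg (· * ε) (add_mul (S.card:ℝ) 1 (K^(S.card+1)))]

/-- If separated rank-`N` approximation on the cube, then bound on the infimum. -/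
lemma inf_bound (d : ℕ) (hd : 1 ≤ d) (m : ℕ) (f : (Fin d → ℝ) → ℝ) (ε : ℝ) (hε : 0 ≤ ε)
    (κ : Type) [Fintype κ] (hκ : Fintype.card κ ≤ m) (w : κ → Fin d → ℝ → ℝ)
    (hw : ∀ s i, ∃ M : ℝ, ∀ t : ℝ, |w s i t| ≤ M)
    (h : ∀ x ∈ unitCube d, |f x - ∑ k, ∏ i, w k i (x i)| ≤ ε) :
    sInf {ρ : ℝ | ∃ u : Fin m → Fin d → ℝ → ℝ,
          (∀ s i, ∃ M : ℝ, ∀ t : ℝ, |u s i t| ≤ M) ∧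
          ρ = ⨆ x : unitCube d, |f x.1 - ∑ s, ∏ i, u s i (x.1 i)|} ≤ ε := by
  obtain ⟨e⟩ : Nonempty (κ ↪ Fin m) :=
    Function.Embedding.nonempty_of_card_le (by simpa using hκ)
  classical
  let u : Fin m → Fin d → ℝ → ℝ := Function.extend e w 0
  have hu : ∀ k, u (e k) = w k := fun k => e.injective.extend_apply _ _ _
  have hu0 : ∀ s, s ∉ Set.range e → u s = 0 := fun s hs => by
    simp only [u]
    rw [Function.extend_apply' _ _ _ (by simpa using hs)]; rfl
  have hsum : ∀ x : Fin d → ℝ, ∑ s, ∏ i, u s i (x i) = ∑ k, ∏ i, w k i (x i) := by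
    intro x
    symm
    refine Fintype.sum_of_injective e e.injective _ _ ?_ ?_
    · intro s hs
      rw [hu0 s hs]
      exact Finset.prod_eq_zero (Finset.mem_univ ⟨0, hd⟩) rfl
    · intro k; rw [hu]
  refine le_trans (csInf_le ⟨0, ?_⟩ ⟨u, ?_, rfl⟩) (Real.iSup_le (fun x => ?_) hε)
  · rintro ρ ⟨u, -, rfl⟩
    exact Real.iSup_nonneg fun _ => abs_nonneg _
  · intro s i
    by_cases hs : s ∈ Set.range e
    · obtain ⟨k, rfl⟩ := hs
      rw [hu]; exact hw k i
    · exact ⟨0, fun t => by rw [hu0 s hs]; simp⟩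
  · rw [hsum]; exact h _ x.2

lemma main_bound (d q : ℕ) (hd : 2 ≤ d) : ∃ C : ℝ, 0 < C ∧ ∀ n : ℕ, 1 ≤ n → ∀ m : ℕ,
    (n * (q+1))^(d-1) ≤ m → ∀ f ∈ UCr d (q+1),
      sInf {ρ : ℝ | ∃ u : Fin m → Fin d → ℝ → ℝ,
          (∀ s i, ∃ M : ℝ, ∀ t : ℝ, |u s i t| ≤ M) ∧
          ρ = ⨆ x : unitCube d, |f x.1 - ∑ s, ∏ i, u s i (x.1 i)|} ≤ C * (1/(n:ℝ))^(q+1) := by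
  obtain ⟨K, hK, H⟩ := aux_one_dim q
  have hd' : (0:ℝ) < ((d-1 : ℕ):ℝ) := by
    have : 0 < d - 1 := by omega
    exact_mod_cast this
  refine ⟨((d-1:ℕ):ℝ) * K^(d-1) * K, by positivity, ?_⟩
  intro n hn m hm f hf
  obtain ⟨p, φ, hp, hφ, hs, happ⟩ := H n hn
  let a : Fin d := ⟨0, by omega⟩
  obtain ⟨κ, _, c, v, hcard, hc, hv, herr⟩ := tensor_approx f K (K * (1/(n:ℝ))^(q+1)) hK
    (by positivity) p φ hp hφ hs (by
      intro i x hx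
      obtain ⟨h1, h2⟩ := slice_ok d (q+1) f hf i x hx
      have := happ _ h1 h2 (x i) (hx i (Set.mem_univ _))
      simpa using this) (Finset.univ.erase a)
  have hS : (Finset.univ.erase a).card = d - 1 := by
    rw [Finset.card_erase_of_mem (Finset.mem_univ _)]; simp
  rw [hS] at hcard
  simp only [hS] at herr
  have hmem : ∀ k t, t ∈ Set.Icc (0:ℝ) 1 → Function.update (c k) a t ∈ unitCube d :=
    fun k t ht => cube_update (hc k) a ht
  classical
  refine inf_bound d (by omega) m f _ (by positivity) κ (by rw [hcard]; simpa using hm)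
    (fun k => Function.update (v k) a
      (fun t => if t ∈ Set.Icc (0:ℝ) 1 then f (Function.update (c k) a t) else 0)) ?_ ?_
  · intro k i
    by_cases h : i = a
    · refine ⟨1, fun t => ?_⟩
      subst h
      simp only [Function.update_self]
      split_ifs with ht
      · exact hf.2 [] (by simp) _ (hmem k t ht)
      · simp
    · exact ⟨K, fun t => by simpa [h] using hv k i t⟩
  · intro x hx
    have := herr x hx
    rw [mul_assoc _ K]
    refine le_of_eq_of_le ?_ this
    congr 2
    refine Finset.sum_congr rfl fun k _ => ?_
    rw [← Finset.prod_erase_mul _ _ (Finset.mem_univ a)]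
    congr 1
    · refine Finset.prod_congr rfl fun i hi => ?_
      have : i ≠ a := Finset.ne_of_mem_erase hi
      simp [this]
    · rw [Function.update_self, if_pos (hx a (Set.mem_univ _))]
      congr 1
      funext i
      by_cases h : i = a
      · subst h; simp
      · simp [h]

theorem theta_UCr_upper_sup (d r : ℕ) (hd : 2 ≤ d) (hr : 1 ≤ r) :
    ∃ C : ℝ, 0 < C ∧ ∀ m : ℕ, 1 ≤ m → ∀ f ∈ UCr d r,
      sInf {ρ : ℝ | ∃ u : Fin m → Fin d → ℝ → ℝ,
          (∀ s i, ∃ M : ℝ, ∀ t : ℝ, |u s i t| ≤ M) ∧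
          ρ = ⨆ x : unitCube d, |f x.1 - ∑ s, ∏ i, u s i (x.1 i)|} ≤
        C * (m : ℝ) ^ (-(r : ℝ) / ((d : ℝ) - 1)) := by
  obtain ⟨q, rfl⟩ : ∃ q, r = q + 1 := ⟨r - 1, by omega⟩
  obtain ⟨C0, hC0, H⟩ := main_bound d q hd
  have hR : (0:ℝ) < ((q+1:ℕ):ℝ) := by positivity
  set R : ℝ := ((q+1:ℕ):ℝ) with hRdef
  have hd1 : ((d-1:ℕ):ℝ) = (d:ℝ) - 1 := by
    rw [Nat.cast_sub (by omega)]; simp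
  have hdpos : (0:ℝ) < (d:ℝ) - 1 := by
    rw [← hd1]
    have : 0 < d - 1 := by omega
    exact_mod_cast this
  refine ⟨(C0 + 1) * (2*R)^(q+1), by positivity, ?_⟩
  intro m hm f hf
  have hm0 : (0:ℝ) < m := by exact_mod_cast hm
  set y : ℝ := (m:ℝ) ^ (1/((d:ℝ)-1)) with hy
  have hy0 : 0 < y := Real.rpow_pos_of_pos hm0 _
  have hyd : y ^ (d-1) = m := by
    rw [hy, ← Real.rpow_natCast, ← Real.rpow_mul hm0.le, hd1, one_div_mul_cancel hdpos.ne',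
      Real.rpow_one]
  have hyr : (m:ℝ) ^ (-R/((d:ℝ)-1)) = (1/y)^(q+1) := by
    rw [one_div, inv_pow, hy, ← Real.rpow_natCast, ← Real.rpow_mul hm0.le, ← Real.rpow_neg hm0.le]
    congr 1
    rw [hRdef]; ring
  rw [hyr]
  by_cases hcase : y < R
  · refine (inf_bound d (by omega) m f 1 zero_le_one Empty (by simp) (fun k => k.elim)
      (fun k => k.elim) ?_).trans ?_
    · intro x hx
      simpa [iterPDW] using hf.2 [] (by simp) x hx
    · rw [mul_assoc, ← mul_pow]
      have h1 : 1 ≤ 2*R*(1/y) := by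
        rw [mul_one_div, le_div_iff₀ hy0]; linarith
      have := one_le_pow₀ (n := q+1) h1
      nlinarith
  · push Not at hcase
    have hyR : 1 ≤ y / R := by rwa [le_div_iff₀ hR, one_mul]
    set n : ℕ := ⌊y/R⌋₊ with hn
    have hn1 : 1 ≤ n := Nat.le_floor (by simpa using hyR)
    have hn1' : (1:ℝ) ≤ n := by exact_mod_cast hn1
    have hle : (n:ℝ) ≤ y/R := Nat.floor_le (by positivity)
    have hlt : y/R < n + 1 := Nat.lt_floor_add_one _
    have hcount : (n * (q+1))^(d-1) ≤ m := by
      have : ((n:ℝ) * R)^(d-1) ≤ m := by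
        rw [← hyd]
        exact pow_le_pow_left₀ (by positivity) ((le_div_iff₀ hR).1 hle) _
      rw [hRdef] at this
      exact_mod_cast this
    refine (H n hn1 m hcount f hf).trans ?_
    have h1 : 1/(n:ℝ) ≤ 2*R*(1/y) := by
      rw [mul_one_div, div_le_div_iff₀ (by linarith) hy0]
      rw [div_lt_iff₀ hR] at hlt
      nlinarith
    have h2 : (1/(n:ℝ))^(q+1) ≤ (2*R*(1/y))^(q+1) := pow_le_pow_left₀ (by positivity) h1 _
    rw [mul_assoc, ← mul_pow]
    have h3 : 0 ≤ (2*R*(1/y))^(q+1) := by positivity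
    nlinarith
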